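/- Let V be a finite set, let V_1, …, V_r ⊆ V, and for each i let F_i : 2^V → ℝ be a nonnegative submodular set function that is V_i-restricted with F_i(∅) = F_i(V_i) = 0; let F = Σ_{i=1}^r F_i and M = max_{1 ≤ i ≤ r} |V_i|. Define c_{uv} = Σ_{i : u, v ∈ V_i} min { F_i(A) : A ⊆ V_i, u ∈ A, v ∉ A } for ordered pairs u ≠ v, and let c⁺(A) = Σ_{u ∈ A, v ∉ A} c_{uv} be the associated cut function. Then c⁺ is submodular with c⁺(∅) = c⁺(V) = 0, and the base polytopes satisfy (4/M²) · B(c⁺) ⊆ B(F) ⊆ B(c⁺). -/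

import Mathlib

/-!
Everything rests on the pointwise bounds `F A ≤ c⁺ A ≤ (M² / 4) F A`, which are proved for each
`F_i` and summed: a pointwise inequality between set functions that agree on the whole ground set
is an inclusion of base polytopes.

* Lower bound: if `G u v` attains the minimum for the pair `(u, v)`, then within `V_i` the set `A`
  equals `⋃ u ∈ A, ⋂ v ∉ A, G u v`, and `F_i`, being nonnegative and submodular, is subadditive
  under unions and intersections.
* Upper bound: `A` itself separates each of the `|A ∩ V_i| |V_i \ A| ≤ |V_i|² / 4` pairs, so each
  of the minima that make up the cut value is at most `F_i A`.
-/

/-- A set function `F` on the subsets of a finite ground set is *submodular* if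
`F (A ∪ B) + F (A ∩ B) ≤ F A + F B` for all `A, B`. -/
def Submodular {V : Type*} [DecidableEq V] (F : Finset V → ℝ) : Prop :=
  ∀ A B : Finset V, F (A ∪ B) + F (A ∩ B) ≤ F A + F B

/-- The cut value of a set `S` for capacities `c`: `c⁺(S) = Σ_{u ∈ S, v ∉ S} c u v`. -/
def cutVal {V : Type*} [Fintype V] [DecidableEq V] (c : V → V → ℝ) (S : Finset V) : ℝ :=
  ∑ u ∈ S, ∑ v ∈ Sᶜ, c u v

/-- The submodular base polytope of a set function `F` with `F ∅ = 0`: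
`B(F) = { w : Σ_{i ∈ A} w i ≤ F A for all A, and Σ_{i ∈ V} w i = F V }`. -/
def basePolytope {V : Type*} [Fintype V] (F : Finset V → ℝ) : Set (V → ℝ) :=
  {w | (∀ A : Finset V, ∑ i ∈ A, w i ≤ F A) ∧ ∑ i, w i = F Finset.univ}

section LatticeSubadditive

variable {α R : Type*}

/-- A function on a lattice is *lattice subadditive* if it is subadditive both under joins and
under meets. Nonnegative submodular set functions are the motivating example. -/
structure LatticeSubadditive [Lattice α] [Add R] [LE R] (f : α → R) : Prop where
  apply_sup_le (a b : α) : f (a ⊔ b) ≤ f a + f b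
  apply_inf_le (a b : α) : f (a ⊓ b) ≤ f a + f b

lemma LatticeSubadditive.nonneg [Lattice α] [AddCommMonoid R] [PartialOrder R]
    [IsOrderedCancelAddMonoid R] {f : α → R} (hf : LatticeSubadditive f) (a : α) : 0 ≤ f a :=
  le_add_iff_nonneg_left (f a) |>.1 <| by simpa only [sup_idem] using hf.apply_sup_le a a

lemma LatticeSubadditive.apply_sup_inf_le_sum [Lattice α] [BoundedOrder α] [AddCommMonoid R]
    [Preorder R] [AddLeftMono R] {f : α → R} (hf : LatticeSubadditive f)
    (hbot : f ⊥ = 0) (htop : f ⊤ = 0) {ι κ : Type*} (s : Finset ι) (t : Finset κ)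
    (g : ι → κ → α) :
    f (s.sup fun i => t.inf (g i)) ≤ ∑ i ∈ s, ∑ j ∈ t, f (g i j) :=
  calc f (s.sup fun i => t.inf (g i))
      ≤ ∑ i ∈ s, f (t.inf (g i)) := s.apply_sup_le_sum hbot (hf.apply_sup_le _ _)
    _ ≤ ∑ i ∈ s, ∑ j ∈ t, f (g i j) :=
        Finset.sum_le_sum fun _ _ =>
          t.apply_sup_le_sum (α := αᵒᵈ) htop (hf.apply_inf_le _ _)

end LatticeSubadditive

section Submodular

variable {V : Type*} [DecidableEq V]

lemma Submodular.latticeSubadditive {F : Finset V → ℝ} (hF : Submodular F)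
    (hnonneg : ∀ A, 0 ≤ F A) : LatticeSubadditive F where
  apply_sup_le A B := (le_add_of_nonneg_right (hnonneg _)).trans (hF A B)
  apply_inf_le A B := (le_add_of_nonneg_left (hnonneg _)).trans (hF A B)

lemma Submodular.sum {ι : Type*} {s : Finset ι} {F : ι → Finset V → ℝ}
    (hF : ∀ i ∈ s, Submodular (F i)) : Submodular fun A => ∑ i ∈ s, F i A := fun A B => by
  simpa only [← Finset.sum_add_distrib] using Finset.sum_le_sum fun i hi => hF i hi A B

lemma submodular_ite_mem_and_notMem {u v : V} {a : ℝ} (ha : u ≠ v → 0 ≤ a) :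
    Submodular fun S => if u ∈ S ∧ v ∉ S then a else 0 := by
  intro A B
  rcases eq_or_ne u v with rfl | huv
  · simp only [and_not_self_iff, if_false, le_refl]
  · have := ha huv
    simp only [Finset.mem_union, Finset.mem_inter]
    by_cases u ∈ A <;> by_cases u ∈ B <;> by_cases v ∈ A <;> by_cases v ∈ B <;> simp [*]

end Submodular

section BasePolytope

variable {V : Type*} [Fintype V] {F G : Finset V → ℝ}

lemma basePolytope_mono (hle : ∀ A, F A ≤ G A) (huniv : F Finset.univ = G Finset.univ) :
    basePolytope F ⊆ basePolytope G :=
  fun _ hw => ⟨fun A => (hw.1 A).trans (hle A), hw.2.trans huniv⟩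

lemma image_smul_basePolytope_subset {t : ℝ} (ht : 0 ≤ t) :
    (fun w : V → ℝ => t • w) '' basePolytope F ⊆ basePolytope fun A => t * F A := by
  rintro _ ⟨w, hw, rfl⟩
  constructor
  · intro A
    simpa only [Pi.smul_apply, smul_eq_mul, ← Finset.mul_sum]
      using mul_le_mul_of_nonneg_left (hw.1 A) ht
  · simp only [Pi.smul_apply, smul_eq_mul, ← Finset.mul_sum, hw.2]

end BasePolytope

section CutVal

variable {V : Type*} [DecidableEq V] [Fintype V]

lemma cutVal_empty (c : V → V → ℝ) : cutVal c ∅ = 0 := Finset.sum_empty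

lemma cutVal_univ (c : V → V → ℝ) : cutVal c Finset.univ = 0 := by
  simp only [cutVal, Finset.compl_univ, Finset.sum_empty, Finset.sum_const_zero]

lemma cutVal_congr {c d : V → V → ℝ} (h : ∀ u v, u ≠ v → c u v = d u v) :
    cutVal c = cutVal d := by
  refine funext fun S => Finset.sum_congr rfl fun u hu => Finset.sum_congr rfl fun v hv => h u v ?_
  exact fun huv => Finset.mem_compl.1 hv (huv ▸ hu)

lemma cutVal_sum {ι : Type*} (s : Finset ι) (c : ι → V → V → ℝ) (S : Finset V) :
    cutVal (fun u v => ∑ i ∈ s, c i u v) S = ∑ i ∈ s, cutVal (c i) S := by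
  simp only [cutVal, Finset.sum_comm (t := s)]

lemma cutVal_eq_sum_ite (c : V → V → ℝ) (S : Finset V) :
    cutVal c S = ∑ u, ∑ v, if u ∈ S ∧ v ∉ S then c u v else 0 := by
  simp only [cutVal, ite_and, ← Finset.mem_compl, Finset.sum_ite_irrel, Finset.sum_const_zero,
    Finset.sum_ite_mem, Finset.univ_inter]

lemma submodular_cutVal {c : V → V → ℝ} (hc : ∀ u v, u ≠ v → 0 ≤ c u v) :
    Submodular (cutVal c) := by
  rw [funext (cutVal_eq_sum_ite c)]
  exact .sum fun u _ => .sum fun v _ => submodular_ite_mem_and_notMem (hc u v)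

end CutVal

section RestrictCapacity

variable {V : Type*} [DecidableEq V]

/-- The restriction to `W` of the capacities `m`: pairs not contained in `W` get capacity `0`.
The capacities `c` of the theorem are the sum of the restrictions of `m i` to `Vs i`. -/
def restrictCapacity (W : Finset V) (m : V → V → ℝ) (u v : V) : ℝ :=
  if u ∈ W ∧ v ∈ W then m u v else 0

lemma cutVal_restrictCapacity [Fintype V] (W : Finset V) (m : V → V → ℝ) (A : Finset V) :
    cutVal (restrictCapacity W m) A = ∑ u ∈ A ∩ W, ∑ v ∈ W \ A, m u v := by
  simp only [cutVal, restrictCapacity, ite_and, Finset.sum_ite_irrel, Finset.sum_const_zero,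
    Finset.sum_ite_mem, Finset.inter_comm Aᶜ, Finset.sdiff_eq_inter_compl]

end RestrictCapacity

section SeparatedPairs

variable {V : Type*} [DecidableEq V]

lemma sup_inf_inter_eq_inter [Fintype V] {A W : Finset V} {G : V → V → Finset V}
    (hmem : ∀ u v, u ∈ A ∩ W → v ∈ W \ A → u ∈ G u v)
    (hnotMem : ∀ u v, u ∈ A ∩ W → v ∈ W \ A → v ∉ G u v) :
    ((A ∩ W).sup fun u => (W \ A).inf (G u)) ∩ W = A ∩ W := by
  ext x
  simp only [Finset.mem_inter, Finset.mem_sup, Finset.mem_inf]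
  constructor
  · rintro ⟨⟨u, hu, hx⟩, hxW⟩
    refine ⟨by_contra fun hxA => ?_, hxW⟩
    have hxWA : x ∈ W \ A := Finset.mem_sdiff.2 ⟨hxW, hxA⟩
    exact hnotMem u x (Finset.mem_inter.2 hu) hxWA (hx x hxWA)
  · exact fun hx => ⟨⟨x, hx, fun v => hmem x v (Finset.mem_inter.2 hx)⟩, hx.2⟩

lemma card_inter_mul_card_sdiff_le (A : Finset V) {W : Finset V} {M : ℕ} (hM : W.card ≤ M) :
    ((A ∩ W).card * (W \ A).card : ℝ) ≤ (M : ℝ) ^ 2 / 4 := by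
  have hcard : ((A ∩ W).card : ℝ) + (W \ A).card ≤ M := by
    exact_mod_cast Finset.inter_comm A W ▸ (Finset.card_inter_add_card_sdiff W A).trans_le hM
  rw [le_div_iff₀' four_pos, ← mul_assoc]
  exact (four_mul_le_sq_add _ _).trans (by gcongr)

end SeparatedPairs

section MinSeparation

variable {V : Type*} [DecidableEq V]

/-- `m` is a table of minimum separation values of `F` within `W`: for distinct `u v ∈ W`, `m u v`
is the least value of `F` on the subsets of `W` that contain `u` but not `v`. No condition is put
on the other entries of `m`. -/
def IsMinSeparation (F : Finset V → ℝ) (W : Finset V) (m : V → V → ℝ) : Prop :=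
  ∀ u v, u ≠ v → u ∈ W → v ∈ W →
    IsLeast {x : ℝ | ∃ A : Finset V, A ⊆ W ∧ u ∈ A ∧ v ∉ A ∧ F A = x} (m u v)

namespace IsMinSeparation

variable {F : Finset V → ℝ} {W : Finset V} {m : V → V → ℝ}

lemma restrictCapacity_nonneg (hm : IsMinSeparation F W m) (hnonneg : ∀ A, 0 ≤ F A) {u v : V}
    (huv : u ≠ v) : 0 ≤ restrictCapacity W m u v := by
  unfold restrictCapacity
  split_ifs with h
  · obtain ⟨A, -, -, -, hA⟩ := (hm u v huv h.1 h.2).1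
    exact hA ▸ hnonneg A
  · exact le_rfl

lemma exists_separator (hm : IsMinSeparation F W m) {A : Finset V} {u v : V}
    (hu : u ∈ A ∩ W) (hv : v ∈ W \ A) : ∃ G : Finset V, u ∈ G ∧ v ∉ G ∧ F G = m u v := by
  obtain ⟨huA, huW⟩ := Finset.mem_inter.1 hu
  obtain ⟨hvW, hvA⟩ := Finset.mem_sdiff.1 hv
  obtain ⟨G, -, hG⟩ := (hm u v (ne_of_mem_of_not_mem huA hvA) huW hvW).1
  exact ⟨G, hG⟩

lemma le_apply (hm : IsMinSeparation F W m) (hres : ∀ A, F A = F (A ∩ W)) {A : Finset V} {u v : V}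
    (hu : u ∈ A ∩ W) (hv : v ∈ W \ A) : m u v ≤ F A := by
  obtain ⟨huA, huW⟩ := Finset.mem_inter.1 hu
  obtain ⟨hvW, hvA⟩ := Finset.mem_sdiff.1 hv
  exact (hm u v (ne_of_mem_of_not_mem huA hvA) huW hvW).2
    ⟨A ∩ W, Finset.inter_subset_right, hu, fun h => hvA (Finset.mem_inter.1 h).1, (hres A).symm⟩

variable [Fintype V]

lemma apply_le_cutVal_restrictCapacity (hm : IsMinSeparation F W m) (hF : LatticeSubadditive F)
    (hres : ∀ A, F A = F (A ∩ W)) (hempty : F ∅ = 0) (hW : F W = 0) (A : Finset V) :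
    F A ≤ cutVal (restrictCapacity W m) A := by
  have hsep (u v : V) (hu : u ∈ A ∩ W) (hv : v ∈ W \ A) := hm.exists_separator hu hv
  choose! G hmem hnotMem hG using hsep
  have huniv : F Finset.univ = 0 := by rw [hres, Finset.univ_inter, hW]
  calc F A = F ((A ∩ W).sup fun u => (W \ A).inf (G u)) := by
        rw [hres, hres (Finset.sup _ _), sup_inf_inter_eq_inter hmem hnotMem]
    _ ≤ ∑ u ∈ A ∩ W, ∑ v ∈ W \ A, F (G u v) :=
        hF.apply_sup_inf_le_sum hempty huniv _ _ G
    _ = ∑ u ∈ A ∩ W, ∑ v ∈ W \ A, m u v :=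
        Finset.sum_congr rfl fun u hu => Finset.sum_congr rfl fun v hv => hG u v hu hv
    _ = cutVal (restrictCapacity W m) A := (cutVal_restrictCapacity W m A).symm

lemma cutVal_restrictCapacity_le (hm : IsMinSeparation F W m) (hnonneg : ∀ A, 0 ≤ F A)
    (hres : ∀ A, F A = F (A ∩ W)) {M : ℕ} (hM : W.card ≤ M) (A : Finset V) :
    cutVal (restrictCapacity W m) A ≤ (M : ℝ) ^ 2 / 4 * F A :=
  calc cutVal (restrictCapacity W m) A
      = ∑ u ∈ A ∩ W, ∑ v ∈ W \ A, m u v := cutVal_restrictCapacity W m A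
    _ ≤ ∑ _u ∈ A ∩ W, ∑ _v ∈ W \ A, F A :=
        Finset.sum_le_sum fun _ hu => Finset.sum_le_sum fun _ hv => hm.le_apply hres hu hv
    _ = ((A ∩ W).card * (W \ A).card : ℝ) * F A := by
        simp only [Finset.sum_const, nsmul_eq_mul, mul_assoc]
    _ ≤ (M : ℝ) ^ 2 / 4 * F A :=
        mul_le_mul_of_nonneg_right (card_inter_mul_card_sdiff_le A hM) (hnonneg A)

end IsMinSeparation

end MinSeparation

theorem stmt4_general {V ι : Type*} [DecidableEq V] [Fintype V] [Fintype ι]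
    {Vs : ι → Finset V} {F : ι → Finset V → ℝ}
    (hF : ∀ i, LatticeSubadditive (F i))
    (hres : ∀ i (A : Finset V), F i A = F i (A ∩ Vs i))
    (h0 : ∀ i, F i ∅ = 0) (hVi : ∀ i, F i (Vs i) = 0)
    {m : ι → V → V → ℝ} (hm : ∀ i, IsMinSeparation (F i) (Vs i) (m i))
    {c : V → V → ℝ} (hc : ∀ u v, u ≠ v → c u v = ∑ i, restrictCapacity (Vs i) (m i) u v)
    {M : ℕ} (hM : ∀ i, (Vs i).card ≤ M) :
    Submodular (cutVal c) ∧
    cutVal c ∅ = 0 ∧ cutVal c Finset.univ = 0 ∧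
    (fun w : V → ℝ => (4 / (M : ℝ) ^ 2) • w) '' basePolytope (cutVal c) ⊆
      basePolytope (fun A : Finset V => ∑ i, F i A) ∧
    basePolytope (fun A : Finset V => ∑ i, F i A) ⊆ basePolytope (cutVal c) := by
  have hnonneg (i : ι) (A : Finset V) : 0 ≤ F i A := (hF i).nonneg A
  have hcut (A : Finset V) : cutVal c A = ∑ i, cutVal (restrictCapacity (Vs i) (m i)) A := by
    rw [cutVal_congr hc, cutVal_sum]
  have hcut_nonneg (u v : V) (huv : u ≠ v) : 0 ≤ c u v :=
    hc u v huv ▸ Finset.sum_nonneg fun i _ => (hm i).restrictCapacity_nonneg (hnonneg i) huv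
  have hFuniv : ∑ i, F i Finset.univ = 0 :=
    Finset.sum_eq_zero fun i _ => by rw [hres, Finset.univ_inter, hVi]
  have hlower (A : Finset V) : ∑ i, F i A ≤ cutVal c A :=
    hcut A ▸ Finset.sum_le_sum fun i _ =>
      (hm i).apply_le_cutVal_restrictCapacity (hF i) (hres i) (h0 i) (hVi i) A
  have hupper (A : Finset V) : cutVal c A ≤ (M : ℝ) ^ 2 / 4 * ∑ i, F i A := by
    rw [hcut, Finset.mul_sum]
    exact Finset.sum_le_sum fun i _ =>
      (hm i).cutVal_restrictCapacity_le (hnonneg i) (hres i) (hM i) A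
  -- For `M = 0` the factor `4 / M ^ 2` is `0`, and the claim is that `F` is nonnegative.
  have hscaled (A : Finset V) : 4 / (M : ℝ) ^ 2 * cutVal c A ≤ ∑ i, F i A := by
    rw [← inv_div]
    exact inv_mul_le_of_le_mul₀ (by positivity) (Finset.sum_nonneg fun i _ => hnonneg i A)
      (hupper A)
  refine ⟨submodular_cutVal hcut_nonneg, cutVal_empty c, cutVal_univ c, ?_, ?_⟩
  · refine (image_smul_basePolytope_subset (by positivity)).trans (basePolytope_mono hscaled ?_)
    rw [cutVal_univ, mul_zero, hFuniv]
  · exact basePolytope_mono hlower (hFuniv.trans (cutVal_univ c).symm)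

/-- Let `F_1, …, F_r` be nonnegative submodular functions, each `V_i`-restricted with
`F_i ∅ = F_i V_i = 0`, and let `F = Σ_i F_i`, `M = max_i |V_i|`. With capacities
`c u v = Σ_{i : u, v ∈ V_i} min { F_i A : A ⊆ V_i, u ∈ A, v ∉ A }` for `u ≠ v`, the cut
function `c⁺` is submodular with `c⁺ ∅ = c⁺ V = 0`, and
`(4/M²) B(c⁺) ⊆ B(F) ⊆ B(c⁺)`. -/
theorem stmt4 {V : Type*} [DecidableEq V] [Fintype V]
    (r : ℕ) (Vs : Fin r → Finset V)
    (F : Fin r → Finset V → ℝ)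
    (hsub : ∀ i, Submodular (F i))
    (hnonneg : ∀ i (A : Finset V), 0 ≤ F i A)
    (hres : ∀ i (A : Finset V), F i A = F i (A ∩ Vs i))
    (h0 : ∀ i, F i ∅ = 0) (hVi : ∀ i, F i (Vs i) = 0)
    (m : Fin r → V → V → ℝ)
    (hm : ∀ (i : Fin r) (u v : V), u ≠ v → u ∈ Vs i → v ∈ Vs i →
      IsLeast {x : ℝ | ∃ A : Finset V, A ⊆ Vs i ∧ u ∈ A ∧ v ∉ A ∧ F i A = x} (m i u v))
    (c : V → V → ℝ)
    (hc : ∀ u v : V, u ≠ v →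
      c u v = ∑ i : Fin r, if u ∈ Vs i ∧ v ∈ Vs i then m i u v else 0)
    (M : ℕ) (hM : M = Finset.univ.sup fun i => (Vs i).card) :
    Submodular (cutVal c) ∧
    cutVal c ∅ = 0 ∧ cutVal c Finset.univ = 0 ∧
    (fun w : V → ℝ => (4 / (M : ℝ) ^ 2) • w) '' basePolytope (cutVal c) ⊆
      basePolytope (fun A : Finset V => ∑ i, F i A) ∧
    basePolytope (fun A : Finset V => ∑ i, F i A) ⊆ basePolytope (cutVal c) :=
  stmt4_general (fun i => (hsub i).latticeSubadditive (hnonneg i)) hres h0 hVi hm hc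
    fun i => hM ▸ Finset.le_sup (f := fun i => (Vs i).card) (Finset.mem_univ i)
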